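/- arXiv:1112.6129 — 4 statements merged into one kernel-verified Lean document; each statement's English description precedes it below -/
import Mathlib

section
/- The formal system CC is consistent: the formula ⊥ (falsehood, definable as (∀x,y)(x ∈ y)) is not derivable in CC. -/
/-!
Deep embedding of Weaver's system CC ("Constructive Concepts").

The language is the first-order language of set theory (∈ and =, variables
only as terms) augmented by a unary operator □.  Formulas use de Bruijn
indices for variables.  ⊥ is the defined formula (∀x,y)(x ∈ y) and ¬A
abbreviates A → ⊥.

CC consists of intuitionistic predicate calculus with equality (presented
in natural-deduction style, with contexts), the modal axiom schemes
(1) A → □A, (2) □(A∧B) ↔ (□A ∧ □B), (3) □(A∨B) ↔ (□A ∨ □B),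
(4) □∃xA ↔ ∃x□A, (5) □∀xA ↔ ∀x□A, (6) □(A→B) → (□A → □B),
the deduction rule inferring A from □A (applicable to theorems, i.e. in
the empty context), the extensionality axiom (7), and the comprehension
scheme (8) (∃x)(∀r)(r ∈ x ↔ □A) with x not free in A.
-/

namespace CC

/-- Formulas of CC; variables are de Bruijn indices. -/
inductive Fm : Type
  | mem : ℕ → ℕ → Fm        -- x ∈ y
  | eq  : ℕ → ℕ → Fm        -- x = y
  | and : Fm → Fm → Fm
  | or  : Fm → Fm → Fm
  | imp : Fm → Fm → Fm
  | all : Fm → Fm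
  | ex  : Fm → Fm
  | box : Fm → Fm
  deriving DecidableEq

namespace Fm

/-- ⊥ stands for (∀x,y)(x ∈ y). -/
def bot : Fm := .all (.all (.mem 1 0))

/-- ¬A abbreviates A → ⊥. -/
def neg (A : Fm) : Fm := A.imp bot

/-- A ↔ B abbreviates (A → B) ∧ (B → A). -/
def iff (A B : Fm) : Fm := (A.imp B).and (B.imp A)

/-- Lift a variable: indices ≥ d are incremented. -/
def liftVar (d n : ℕ) : ℕ := if n < d then n else n + 1

/-- Lift a formula at depth d: free indices ≥ d are incremented. -/
def liftAt (d : ℕ) : Fm → Fm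
  | mem a b => mem (liftVar d a) (liftVar d b)
  | eq a b  => eq (liftVar d a) (liftVar d b)
  | and A B => and (A.liftAt d) (B.liftAt d)
  | or A B  => or (A.liftAt d) (B.liftAt d)
  | imp A B => imp (A.liftAt d) (B.liftAt d)
  | all A   => all (A.liftAt (d+1))
  | ex A    => ex (A.liftAt (d+1))
  | box A   => box (A.liftAt d)

/-- Lift a formula (all free indices incremented). -/
def shift : Fm → Fm := liftAt 0

/-- Substitute variable t for index d (indices above d are lowered). -/
def substVar (d t n : ℕ) : ℕ := if n < d then n else if n = d then t else n - 1

/-- Substitute the variable t for the de Bruijn index d. -/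
def subst (d t : ℕ) : Fm → Fm
  | mem a b => mem (substVar d t a) (substVar d t b)
  | eq a b  => eq (substVar d t a) (substVar d t b)
  | and A B => and (A.subst d t) (B.subst d t)
  | or A B  => or (A.subst d t) (B.subst d t)
  | imp A B => imp (A.subst d t) (B.subst d t)
  | all A   => all (A.subst (d+1) (t+1))
  | ex A    => ex (A.subst (d+1) (t+1))
  | box A   => box (A.subst d t)

end Fm

/-- The extensionality axiom (7): x = y ↔ (∀u)(u ∈ x ↔ u ∈ y)
(universally closed). -/
def extAx : Fm :=
  .all (.all (Fm.iff (.eq 1 0) (.all (Fm.iff (.mem 0 2) (.mem 0 1)))))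

/-- Derivability in CC, from a list of hypotheses.  The rules are those of
intuitionistic natural deduction with equality (with ex falso for the
defined ⊥), the modal axioms (1)–(6), the rule inferring A from □A (for
theorems, i.e. with no hypotheses), extensionality, and comprehension.
In `compr`, the formula `A` has de Bruijn index 0 as the fixed variable r;
lifting at 1 guarantees that the comprehension variable x does not occur
freely in A. -/
inductive Prf : List Fm → Fm → Prop
  | hyp {Γ : List Fm} {A : Fm} : A ∈ Γ → Prf Γ A
  | andI {Γ : List Fm} {A B : Fm} : Prf Γ A → Prf Γ B → Prf Γ (.and A B)
  | andE1 {Γ : List Fm} {A B : Fm} : Prf Γ (.and A B) → Prf Γ A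
  | andE2 {Γ : List Fm} {A B : Fm} : Prf Γ (.and A B) → Prf Γ B
  | orI1 {Γ : List Fm} {A B : Fm} : Prf Γ A → Prf Γ (.or A B)
  | orI2 {Γ : List Fm} {A B : Fm} : Prf Γ B → Prf Γ (.or A B)
  | orE {Γ : List Fm} {A B C : Fm} : Prf Γ (.or A B) → Prf (A :: Γ) C → Prf (B :: Γ) C → Prf Γ C
  | impI {Γ : List Fm} {A B : Fm} : Prf (A :: Γ) B → Prf Γ (.imp A B)
  | impE {Γ : List Fm} {A B : Fm} : Prf Γ (.imp A B) → Prf Γ A → Prf Γ B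
  | exfalso {Γ : List Fm} {A : Fm} : Prf Γ Fm.bot → Prf Γ A
  | allI {Γ : List Fm} {A : Fm} : Prf (Γ.map Fm.shift) A → Prf Γ (.all A)
  | allE {Γ : List Fm} {A : Fm} (t : ℕ) : Prf Γ (.all A) → Prf Γ (A.subst 0 t)
  | exI {Γ : List Fm} {A : Fm} (t : ℕ) : Prf Γ (A.subst 0 t) → Prf Γ (.ex A)
  | exE {Γ : List Fm} {A B : Fm} : Prf Γ (.ex A) → Prf (A :: Γ.map Fm.shift) B.shift → Prf Γ B
  | refl {Γ : List Fm} (t : ℕ) : Prf Γ (.eq t t)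
  | eqSubst {Γ : List Fm} {A : Fm} (s t : ℕ) :
      Prf Γ (.eq s t) → Prf Γ (A.subst 0 s) → Prf Γ (A.subst 0 t)
  | ax1 {Γ : List Fm} {A : Fm} : Prf Γ (A.imp (.box A))
  | ax2 {Γ : List Fm} {A B : Fm} : Prf Γ (Fm.iff (.box (.and A B)) (.and (.box A) (.box B)))
  | ax3 {Γ : List Fm} {A B : Fm} : Prf Γ (Fm.iff (.box (.or A B)) (.or (.box A) (.box B)))
  | ax4 {Γ : List Fm} {A : Fm} : Prf Γ (Fm.iff (.box (.ex A)) (.ex (.box A)))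
  | ax5 {Γ : List Fm} {A : Fm} : Prf Γ (Fm.iff (.box (.all A)) (.all (.box A)))
  | ax6 {Γ : List Fm} {A B : Fm} : Prf Γ ((Fm.box (A.imp B)).imp ((Fm.box A).imp (.box B)))
  | boxE {A : Fm} : Prf [] (.box A) → Prf [] A
  | ext {Γ : List Fm} : Prf Γ extAx
  | compr {Γ : List Fm} (A : Fm) :
      Prf Γ (.ex (.all (Fm.iff (.mem 0 1) (.box (A.liftAt 1)))))

/-!
CC is interpreted in a Kripke model with worlds `0, 1, 2, …` and a constant domain, where `→` at
world `n` refers to the worlds `m ≤ n` and `□` to the worlds `m < n`. Thus `□A` at `n + 1` amounts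
to `A` at `n`: if `□A` is forced at all worlds then so is `A`, although `□A → A` fails in general.
Equality is read as having the same members at all worlds `m ≤ n`. Membership in `{r | □A}` at `n`
only refers to `A` at worlds before `n`, so the formal terms `{r | □A}` can be taken as the domain,
with membership defined by recursion on the world. All these sets contain everything at world `0`;
adding a term for the empty set makes `⊥` fail at every world.
-/

/-- Extension of an assignment by a value for index `0`, as needed under a quantifier. -/
def cons {α : Type*} (x : α) (v : ℕ → α) : ℕ → α
  | 0 => x
  | k + 1 => v k

section Assignments

variable {α : Type*} (d t : ℕ) (x : α) (v : ℕ → α)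

theorem cons_comp_liftVar_zero : cons x v ∘ Fm.liftVar 0 = v := by
  funext k
  simp [Fm.liftVar, cons]

theorem cons_comp_liftVar_succ :
    cons x v ∘ Fm.liftVar (d + 1) = cons x (v ∘ Fm.liftVar d) := by
  funext k
  cases k <;> grind [cons, Fm.liftVar]

theorem comp_substVar_zero : v ∘ Fm.substVar 0 t = cons (v t) v := by
  funext k
  cases k <;> simp [Fm.substVar, cons]

theorem cons_comp_substVar_succ :
    cons x v ∘ Fm.substVar (d + 1) (t + 1) = cons x (v ∘ Fm.substVar d t) := by
  funext k
  rcases k with _ | _ | k <;> grind [cons, Fm.substVar]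

end Assignments

section Forcing

variable {D : Type*} {M M' : ℕ → D → D → Prop} {m n d t : ℕ} {x y z : D} {v w : ℕ → D} {A B : Fm}

/-- Coextensionality at world `n`: `x` and `y` have the same members at all worlds `m ≤ n`. This
interprets equality. -/
def Coext (M : ℕ → D → D → Prop) (n : ℕ) (x y : D) : Prop :=
  ∀ m ≤ n, ∀ u, M m u x ↔ M m u y

theorem Coext.refl (M : ℕ → D → D → Prop) (n : ℕ) (x : D) : Coext M n x x :=
  fun _ _ _ => Iff.rfl

theorem Coext.symm (h : Coext M n x y) : Coext M n y x :=
  fun m hm u => (h m hm u).symm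

theorem Coext.trans (h : Coext M n x y) (h' : Coext M n y z) : Coext M n x z :=
  fun m hm u => (h m hm u).trans (h' m hm u)

theorem Coext.mono (h : Coext M n x y) (hmn : m ≤ n) : Coext M m x y :=
  fun k hk => h k (hk.trans hmn)

theorem Coext.cons (hxy : Coext M n x y) (h : ∀ i, Coext M n (v i) (w i)) (i : ℕ) :
    Coext M n (cons x v i) (cons y w i) := by
  cases i with
  | zero => exact hxy
  | succ i => exact h i

/-- Kripke forcing over the worlds `0, 1, 2, …` with constant domain `D`, where `M n u x` says that
`u ∈ x` is forced at world `n`. The worlds accessible from `n` are the `m ≤ n` for implication and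
the `m < n` for `□`; in particular every `□A` is forced at world `0`. -/
def Force (M : ℕ → D → D → Prop) : ℕ → Fm → (ℕ → D) → Prop
  | n, .mem a b, v => M n (v a) (v b)
  | n, .eq a b, v => Coext M n (v a) (v b)
  | n, .and A B, v => Force M n A v ∧ Force M n B v
  | n, .or A B, v => Force M n A v ∨ Force M n B v
  | n, .imp A B, v => ∀ m ≤ n, Force M m A v → Force M m B v
  | n, .all A, v => ∀ x, Force M n A (cons x v)
  | n, .ex A, v => ∃ x, Force M n A (cons x v)
  | n, .box A, v => ∀ m < n, Force M m A v

theorem force_iff : Force M n (A.iff B) v ↔ ∀ m ≤ n, (Force M m A v ↔ Force M m B v) := by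
  simp only [Fm.iff, Force, iff_iff_implies_and_implies, forall_and]

theorem force_extAx : Force M n extAx v := by
  refine fun x y => force_iff.2 fun m _ => ?_
  have h : Force M m (.all (Fm.iff (.mem 0 2) (.mem 0 1))) (cons y (cons x v)) ↔
      ∀ u, ∀ k ≤ m, (M k u x ↔ M k u y) := forall_congr' fun _ => force_iff
  rw [h]
  exact ⟨fun hxy u k hk => hxy k hk u, fun hxy k hk u => hxy u k hk⟩

theorem force_liftAt : Force M n (A.liftAt d) v ↔ Force M n A (v ∘ Fm.liftVar d) := by
  induction A generalizing n d v with
  | mem | eq => rfl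
  | and A B ihA ihB | or A B ihA ihB | imp A B ihA ihB => simp only [Fm.liftAt, Force, ihA, ihB]
  | all A ih | ex A ih => simp only [Fm.liftAt, Force, ih, cons_comp_liftVar_succ]
  | box A ih => simp only [Fm.liftAt, Force, ih]

theorem force_subst : Force M n (A.subst d t) v ↔ Force M n A (v ∘ Fm.substVar d t) := by
  induction A generalizing n d t v with
  | mem | eq => rfl
  | and A B ihA ihB | or A B ihA ihB | imp A B ihA ihB => simp only [Fm.subst, Force, ihA, ihB]
  | all A ih | ex A ih => simp only [Fm.subst, Force, ih, cons_comp_substVar_succ]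
  | box A ih => simp only [Fm.subst, Force, ih]

theorem force_shift_cons : Force M n A.shift (cons x v) ↔ Force M n A v := by
  rw [Fm.shift, force_liftAt, cons_comp_liftVar_zero]

theorem force_subst_zero : Force M n (A.subst 0 t) v ↔ Force M n A (cons (v t) v) := by
  rw [force_subst, comp_substVar_zero]

theorem forall_force_map_shift {Γ : List Fm} (h : ∀ B ∈ Γ, Force M n B v) :
    ∀ B ∈ Γ.map Fm.shift, Force M n B (cons x v) :=
  List.forall_mem_map.2 fun B hB => force_shift_cons.2 (h B hB)

theorem Force.mono (hM : ∀ u x, Antitone fun n => M n u x) (h : Force M n A v) (hmn : m ≤ n) :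
    Force M m A v := by
  induction A generalizing v with
  | mem a b => exact hM _ _ hmn h
  | eq a b => exact Coext.mono h hmn
  | and A B ihA ihB => exact h.imp ihA ihB
  | or A B ihA ihB => exact Or.imp ihA ihB h
  | imp A B => exact fun k hk => h k (hk.trans hmn)
  | all A ih => exact fun x => ih (h x)
  | ex A ih => exact Exists.imp (fun _ => ih) h
  | box A => exact fun k hk => h k (hk.trans_le hmn)

theorem force_box_zero : Force M 0 (.box A) v := fun _ h => absurd h (Nat.not_lt_zero _)

theorem force_box_succ (hM : ∀ u x, Antitone fun n => M n u x) :
    Force M (n + 1) (.box A) v ↔ Force M n A v :=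
  ⟨fun h => h n n.lt_succ_self, fun h _ hm => h.mono hM (Nat.le_of_lt_succ hm)⟩

theorem force_box_and : Force M n (.box (.and A B)) v ↔ Force M n (.and (.box A) (.box B)) v := by
  simp only [Force, forall_and]

theorem force_box_or (hM : ∀ u x, Antitone fun n => M n u x) :
    Force M n (.box (.or A B)) v ↔ Force M n (.or (.box A) (.box B)) v := by
  cases n with
  | zero => exact iff_of_true force_box_zero (.inl force_box_zero)
  | succ n =>
    exact (force_box_succ hM).trans (or_congr (force_box_succ hM) (force_box_succ hM)).symm

theorem force_box_ex (hM : ∀ u x, Antitone fun n => M n u x) :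
    Force M n (.box (.ex A)) v ↔ Force M n (.ex (.box A)) v := by
  cases n with
  | zero => exact iff_of_true force_box_zero ⟨v 0, force_box_zero⟩
  | succ n => exact (force_box_succ hM).trans (exists_congr fun _ => force_box_succ hM).symm

theorem force_box_all : Force M n (.box (.all A)) v ↔ Force M n (.all (.box A)) v :=
  ⟨fun h x m hm => h m hm x, fun h m hm x => h x m hm⟩

theorem force_box_imp (h : Force M n (.box (.imp A B)) v) :
    Force M n (.imp (.box A) (.box B)) v :=
  fun _ hm hA k hk => h k (hk.trans_le hm) k le_rfl (hA k hk)

theorem force_congr_coext (hM : ∀ m ≤ n, ∀ u u' x, Coext M m u u' → (M m u x ↔ M m u' x))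
    (h : ∀ i, Coext M n (v i) (w i)) : Force M n A v ↔ Force M n A w := by
  induction A generalizing n v w with
  | mem a b => exact (hM n le_rfl _ _ _ (h a)).trans (h b n le_rfl _)
  | eq a b =>
    exact ⟨fun hab => ((h a).symm.trans hab).trans (h b),
      fun hab => ((h a).trans hab).trans (h b).symm⟩
  | and A B ihA ihB => exact and_congr (ihA hM h) (ihB hM h)
  | or A B ihA ihB => exact or_congr (ihA hM h) (ihB hM h)
  | imp A B ihA ihB =>
    refine forall₂_congr fun m hm => ?_
    have hM' := fun k hk => hM k (le_trans hk hm)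
    exact imp_congr (ihA hM' fun i => (h i).mono hm) (ihB hM' fun i => (h i).mono hm)
  | all A ih => exact forall_congr' fun x => ih hM ((Coext.refl M n x).cons h)
  | ex A ih => exact exists_congr fun x => ih hM ((Coext.refl M n x).cons h)
  | box A ih =>
    exact forall₂_congr fun m hm =>
      ih (fun k hk => hM k (hk.trans hm.le)) fun i => (h i).mono hm.le

theorem force_congr_mem (h : ∀ m ≤ n, M m = M' m) : Force M n A v ↔ Force M' n A v := by
  induction A generalizing n v with
  | mem a b => simp only [Force, h n le_rfl]
  | eq a b => exact forall₂_congr fun m hm => by rw [h m hm]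
  | and A B ihA ihB => exact and_congr (ihA h) (ihB h)
  | or A B ihA ihB => exact or_congr (ihA h) (ihB h)
  | imp A B ihA ihB =>
    refine forall₂_congr fun m hm => ?_
    have h' := fun k hk => h k (le_trans hk hm)
    exact imp_congr (ihA h') (ihB h')
  | all A ih => exact forall_congr' fun x => ih h
  | ex A ih => exact exists_congr fun x => ih h
  | box A ih => exact forall₂_congr fun m hm => ih fun k hk => h k (hk.trans hm.le)

/-- The closure conditions on a membership relation over the worlds under which it validates CC. -/
structure IsModel (M : ℕ → D → D → Prop) : Prop where
  antitone : ∀ u x, Antitone fun n => M n u x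
  mem_congr : ∀ n u u' x, Coext M n u u' → (M n u x ↔ M n u' x)
  exists_compr : ∀ A v, ∃ x, ∀ n u, M n u x ↔ Force M n (.box A) (cons u v)
  exists_not_mem : ∃ u x, ¬ M 0 u x

namespace IsModel

theorem not_force_bot (hM : IsModel M) : ¬ Force M n Fm.bot v := by
  obtain ⟨u, x, hux⟩ := hM.exists_not_mem
  exact fun h => hux (hM.antitone u x n.zero_le (h u x))

theorem force_compr (hM : IsModel M) (A : Fm) :
    Force M n (.ex (.all (Fm.iff (.mem 0 1) (.box (A.liftAt 1))))) v := by
  obtain ⟨x, hx⟩ := hM.exists_compr A v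
  refine ⟨x, fun u => force_iff.2 fun m _ => (hx m u).trans ?_⟩
  change _ ↔ Force M m ((Fm.box A).liftAt 1) _
  rw [force_liftAt, cons_comp_liftVar_succ, cons_comp_liftVar_zero]

theorem force_subst_of_coext (hM : IsModel M) {s : ℕ} (h : Coext M n (v s) (v t))
    (hA : Force M n (A.subst 0 s) v) : Force M n (A.subst 0 t) v := by
  rw [force_subst_zero] at hA ⊢
  exact (force_congr_coext (fun m _ => hM.mem_congr m) (h.cons fun i => .refl M n (v i))).1 hA

end IsModel

theorem Prf.force {Γ : List Fm} (hM : IsModel M) (h : Prf Γ A) :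
    ∀ n v, (∀ B ∈ Γ, Force M n B v) → Force M n A v := by
  induction h with
  | hyp hA => exact fun n v hΓ => hΓ _ hA
  | andI _ _ ihA ihB => exact fun n v hΓ => ⟨ihA n v hΓ, ihB n v hΓ⟩
  | andE1 _ ih => exact fun n v hΓ => (ih n v hΓ).1
  | andE2 _ ih => exact fun n v hΓ => (ih n v hΓ).2
  | orI1 _ ih => exact fun n v hΓ => .inl (ih n v hΓ)
  | orI2 _ ih => exact fun n v hΓ => .inr (ih n v hΓ)
  | orE _ _ _ ih ihA ihB =>
    exact fun n v hΓ => (ih n v hΓ).elim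
      (fun hA => ihA n v (List.forall_mem_cons.2 ⟨hA, hΓ⟩))
      (fun hB => ihB n v (List.forall_mem_cons.2 ⟨hB, hΓ⟩))
  | impI _ ih =>
    exact fun n v hΓ m hm hA =>
      ih m v (List.forall_mem_cons.2 ⟨hA, fun B hB => (hΓ B hB).mono hM.antitone hm⟩)
  | impE _ _ ih ihA => exact fun n v hΓ => ih n v hΓ n le_rfl (ihA n v hΓ)
  | exfalso _ ih => exact fun n v hΓ => absurd (ih n v hΓ) hM.not_force_bot
  | allI _ ih => exact fun n v hΓ x => ih n (cons x v) (forall_force_map_shift hΓ)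
  | allE t _ ih => exact fun n v hΓ => force_subst_zero.2 (ih n v hΓ (v t))
  | exI t _ ih => exact fun n v hΓ => ⟨v t, force_subst_zero.1 (ih n v hΓ)⟩
  | exE _ _ ih ihB =>
    exact fun n v hΓ => (ih n v hΓ).elim fun x hA => force_shift_cons.1 <|
      ihB n (cons x v) (List.forall_mem_cons.2 ⟨hA, forall_force_map_shift hΓ⟩)
  | refl t => exact fun n v _ => .refl M n (v t)
  | eqSubst s t _ _ ih ihA => exact fun n v hΓ => hM.force_subst_of_coext (ih n v hΓ) (ihA n v hΓ)
  | ax1 => exact fun n v _ m _ hA k hk => hA.mono hM.antitone hk.le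
  | ax2 => exact fun n v _ => force_iff.2 fun _ _ => force_box_and
  | ax3 => exact fun n v _ => force_iff.2 fun _ _ => force_box_or hM.antitone
  | ax4 => exact fun n v _ => force_iff.2 fun _ _ => force_box_ex hM.antitone
  | ax5 => exact fun n v _ => force_iff.2 fun _ _ => force_box_all
  | ax6 => exact fun n v _ _ _ => force_box_imp
  | boxE _ ih => exact fun n v _ => ih (n + 1) v (List.forall_mem_nil _) n n.lt_succ_self
  | ext => exact fun n v _ => force_extAx
  | compr A => exact fun n v _ => hM.force_compr A

end Forcing

/-- The domain of the term model: an empty set, which refutes `⊥`, and for each formula `A` and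
assignment `v` the set `compr A v` of all `r` with `□A`, where `r` is the variable with index `0` in
`A` and the other variables are given by `v`. -/
inductive Concept : Type
  | empty : Concept
  | compr (A : Fm) (v : ℕ → Concept) : Concept

namespace Concept

/-- Membership in the term model at world `n`. Only membership at earlier worlds is needed to force
`A` there; truncating to these makes the recursion well-founded, see `mem_compr`. -/
def Mem : ℕ → Concept → Concept → Prop
  | _, _, empty => False
  | n, u, compr A v => ∀ m < n, Force (fun k x y => ∃ _ : k < n, Mem k x y) m A (cons u v)
termination_by n => n

variable {n : ℕ} {A : Fm} {u : Concept} {v : ℕ → Concept}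

theorem not_mem_empty : ¬ Mem n u empty := by
  rw [Mem]
  exact not_false

theorem mem_compr : Mem n u (compr A v) ↔ Force Mem n (.box A) (cons u v) := by
  rw [Mem]
  refine forall₂_congr fun m hm => force_congr_mem fun k hk => ?_
  simp only [exists_prop, hk.trans_lt hm, true_and]

theorem antitone_mem (u x : Concept) : Antitone fun n => Mem n u x := by
  intro m n hmn h
  cases x with
  | empty => exact absurd h not_mem_empty
  | compr A v => exact mem_compr.2 fun k hk => mem_compr.1 h k (hk.trans_le hmn)

theorem mem_congr (n : ℕ) (u u' x : Concept) (h : Coext Mem n u u') : Mem n u x ↔ Mem n u' x := by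
  induction n using Nat.strong_induction_on generalizing u u' x with
  | _ n ih =>
    cases x with
    | empty => exact iff_of_false not_mem_empty not_mem_empty
    | compr A v =>
      rw [mem_compr, mem_compr]
      exact forall₂_congr fun m hm =>
        force_congr_coext (fun k hk => ih k (hk.trans_lt hm))
          ((h.mono hm.le).cons fun i => .refl Mem m (v i))

theorem isModel_mem : IsModel Mem where
  antitone := antitone_mem
  mem_congr := mem_congr
  exists_compr A v := ⟨compr A v, fun _ _ => mem_compr⟩
  exists_not_mem := ⟨empty, empty, not_mem_empty⟩

end Concept

/-- **Theorem 5.1 (Weaver).**  CC is consistent: the formula ⊥,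
that is (∀x,y)(x ∈ y), is not derivable in CC. -/
theorem CC_consistent : ¬ Prf [] Fm.bot :=
  fun h => Concept.isModel_mem.not_force_bot
    (h.force Concept.isModel_mem 0 (fun _ => .empty) (List.forall_mem_nil _))

end CC
end

section
/- In CC, one can derive the existence of the Russell-style concept R satisfying (∀r)(r ∈ R ↔ □(r ∉ r)) (an instance of the comprehension scheme), and for any such R the formula ¬(R ∉ R) is derivable: assuming R ∉ R yields □(R ∉ R) by axiom (1), hence R ∈ R by the defining property of R, a contradiction. Formally, CC proves (∃x)[(∀r)(r ∈ x ↔ □(r ∉ r)) ∧ ¬¬(x ∈ x)]. -/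
/-!
Deep embedding of Weaver's system CC ("Constructive Concepts").

The language is the first-order language of set theory (∈ and =, variables
only as terms) augmented by a unary operator □.  Formulas use de Bruijn
indices for variables.  ⊥ is the defined formula (∀x,y)(x ∈ y) and ¬A
abbreviates A → ⊥.

CC consists of intuitionistic predicate calculus with equality (presented
in natural-deduction style, with contexts), the modal axiom schemes
(1) A → □A, (2) □(A∧B) ↔ (□A ∧ □B), (3) □(A∨B) ↔ (□A ∨ □B),
(4) □∃xA ↔ ∃x□A, (5) □∀xA ↔ ∀x□A, (6) □(A→B) → (□A → □B),
the deduction rule inferring A from □A (applicable to theorems, i.e. in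
the empty context), the extensionality axiom (7), and the comprehension
scheme (8) (∃x)(∀r)(r ∈ x ↔ □A) with x not free in A.
-/

namespace CC

namespace Fm

theorem subst_liftAt_succ (A : Fm) (d : ℕ) : (A.liftAt (d + 1)).subst d d = A := by
  have substVar_liftVar (d n : ℕ) : substVar d d (liftVar (d + 1) n) = n := by
    unfold substVar liftVar
    split_ifs <;> omega
  induction A generalizing d with
  | mem | eq => simp only [liftAt, subst, substVar_liftVar]
  | and _ _ ihA ihB | or _ _ ihA ihB | imp _ _ ihA ihB => simp only [liftAt, subst, ihA, ihB]
  | all _ ih | ex _ ih | box _ ih => simp only [liftAt, subst, ih]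

/-- The formula `(∀r)(r ∈ x ↔ □(r ∉ r))`, saying that the variable `x` is a Russell concept;
below the quantifier `x` has index `x + 1`. -/
def isRussell (x : ℕ) : Fm := .all ((mem 0 (x + 1)).iff (.box (mem 0 0).neg))

end Fm

namespace Prf

variable {Γ : List Fm} {A B : Fm}

theorem ex_mono (hA : Prf Γ (.ex A)) (hB : Prf (A :: Γ.map Fm.shift) B) : Prf Γ (.ex B) :=
  .exE hA (.exI 0 ((Fm.subst_liftAt_succ B 0).symm ▸ hB))

-- An implication inside `CC` rather than a rule: since `boxE` is confined to the empty context,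
-- induction on derivations does not give the weakening by `¬A` that the rule would need.
theorem box_neg_imp_self_imp_neg_neg : Prf Γ (((Fm.box A.neg).imp A).imp A.neg.neg) := by
  refine .impI (.impI ?_)
  have neg_A : Prf (A.neg :: (Fm.box A.neg).imp A :: Γ) A.neg := .hyp (by simp)
  have box_neg_A : Prf (A.neg :: (Fm.box A.neg).imp A :: Γ) (.box A.neg) := .impE .ax1 neg_A
  exact .impE neg_A (.impE (.hyp (by simp)) box_neg_A)

theorem ex_isRussell : Prf Γ (.ex (.isRussell 0)) := .compr (Fm.neg (.mem 0 0))

theorem mem_self_iff_of_isRussell {x : ℕ} (hx : Prf Γ (.isRussell x)) :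
    Prf Γ (.iff (.mem x x) (.box (Fm.neg (.mem x x)))) :=
  .allE x hx

theorem neg_neg_mem_self_of_isRussell {x : ℕ} (hx : Prf Γ (.isRussell x)) :
    Prf Γ (Fm.neg (.neg (.mem x x))) :=
  .impE box_neg_imp_self_imp_neg_neg (.andE2 (mem_self_iff_of_isRussell hx))

end Prf

/-- CC proves the existence of the Russell-style concept R
with (∀r)(r ∈ R ↔ □(r ∉ r)), and for it ¬(R ∉ R), i.e. ¬¬(R ∈ R), is
derivable.  Formally: CC proves (∃x)[(∀r)(r ∈ x ↔ □(r ∉ r)) ∧ ¬¬(x ∈ x)].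
(Here ¬A is A → ⊥ with ⊥ = (∀x,y)(x ∈ y), and r ∉ r is ¬(r ∈ r).) -/
theorem russell_not_not_self_membership :
    Prf [] (.ex (.and
      (.all (Fm.iff (.mem 0 1) (.box (Fm.neg (.mem 0 0)))))
      (Fm.neg (Fm.neg (.mem 0 0))))) := by
  have russell : Prf [.isRussell 0] (.isRussell 0) := .hyp List.mem_cons_self
  exact Prf.ex_mono Prf.ex_isRussell (.andI russell (Prf.neg_neg_mem_self_of_isRussell russell))

end CC
end

section
/- The formula (∀x)(x ∈ ω → Sx ∈ ω) is provable in CC″. -/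
/-!
Deep embedding of CC″: Weaver's system CC ("Constructive Concepts")
extended by definitions with a constant 0, a unary function symbol S and a
constant ω, satisfying
  r ∈ 0 ↔ □⊥,
  r ∈ Sx ↔ □(r = x),
  r ∈ ω ↔ □(∀z)[(0 ∈ z ∧ (∀x)(x ∈ z → Sx ∈ z)) → r ∈ z].

The language is the first-order language of set theory (∈ and =) with the
extra function symbols, augmented by a unary operator □.  Variables are de
Bruijn indices.  ⊥ is the defined formula (∀x,y)(x ∈ y) and ¬A abbreviates
A → ⊥.  CC consists of intuitionistic predicate calculus with equality,
the modal axiom schemes (1)–(6), the deduction rule inferring A from □A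
(for theorems), extensionality, and the comprehension scheme
(∃x)(∀r)(r ∈ x ↔ □A) with x not free in A.
-/

namespace CC2

/-- Terms of CC″: variables (de Bruijn indices), 0, S, ω. -/
inductive Tm : Type
  | var : ℕ → Tm
  | zero : Tm
  | succ : Tm → Tm
  | omega : Tm
  deriving DecidableEq

/-- Formulas of CC″. -/
inductive Fm : Type
  | mem : Tm → Tm → Fm      -- s ∈ t
  | eq  : Tm → Tm → Fm      -- s = t
  | and : Fm → Fm → Fm
  | or  : Fm → Fm → Fm
  | imp : Fm → Fm → Fm
  | all : Fm → Fm
  | ex  : Fm → Fm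
  | box : Fm → Fm
  deriving DecidableEq

namespace Tm

/-- Lift a term at depth d: free indices ≥ d are incremented. -/
def liftAt (d : ℕ) : Tm → Tm
  | var n => var (if n < d then n else n + 1)
  | zero => zero
  | succ t => succ (t.liftAt d)
  | omega => omega

/-- Substitute the term s for the de Bruijn index d. -/
def subst (d : ℕ) (s : Tm) : Tm → Tm
  | var n => if n < d then var n else if n = d then s else var (n - 1)
  | zero => zero
  | succ t => succ (subst d s t)
  | omega => omega

end Tm

namespace Fm

/-- ⊥ stands for (∀x,y)(x ∈ y). -/
def bot : Fm := .all (.all (.mem (.var 1) (.var 0)))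

/-- ¬A abbreviates A → ⊥. -/
def neg (A : Fm) : Fm := A.imp bot

/-- A ↔ B abbreviates (A → B) ∧ (B → A). -/
def iff (A B : Fm) : Fm := (A.imp B).and (B.imp A)

/-- Lift a formula at depth d: free indices ≥ d are incremented. -/
def liftAt (d : ℕ) : Fm → Fm
  | mem a b => mem (a.liftAt d) (b.liftAt d)
  | eq a b  => eq (a.liftAt d) (b.liftAt d)
  | and A B => and (A.liftAt d) (B.liftAt d)
  | or A B  => or (A.liftAt d) (B.liftAt d)
  | imp A B => imp (A.liftAt d) (B.liftAt d)
  | all A   => all (A.liftAt (d+1))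
  | ex A    => ex (A.liftAt (d+1))
  | box A   => box (A.liftAt d)

/-- Lift a formula (all free indices incremented). -/
def shift : Fm → Fm := liftAt 0

/-- Substitute the term s for the de Bruijn index d. -/
def subst (d : ℕ) (s : Tm) : Fm → Fm
  | mem a b => mem (Tm.subst d s a) (Tm.subst d s b)
  | eq a b  => eq (Tm.subst d s a) (Tm.subst d s b)
  | and A B => and (A.subst d s) (B.subst d s)
  | or A B  => or (A.subst d s) (B.subst d s)
  | imp A B => imp (A.subst d s) (B.subst d s)
  | all A   => all (A.subst (d+1) (s.liftAt 0))
  | ex A    => ex (A.subst (d+1) (s.liftAt 0))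
  | box A   => box (A.subst d s)

end Fm

/-- The extensionality axiom (7): x = y ↔ (∀u)(u ∈ x ↔ u ∈ y)
(universally closed). -/
def extAx : Fm :=
  .all (.all (Fm.iff (.eq (.var 1) (.var 0))
    (.all (Fm.iff (.mem (.var 0) (.var 2)) (.mem (.var 0) (.var 1))))))

/-- Defining axiom of 0:  (∀r)(r ∈ 0 ↔ □⊥). -/
def zeroAx : Fm := .all (Fm.iff (.mem (.var 0) .zero) (.box Fm.bot))

/-- Defining axiom of S:  (∀r,x)(r ∈ Sx ↔ □(r = x)). -/
def succAx : Fm :=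
  .all (.all (Fm.iff (.mem (.var 1) (.succ (.var 0)))
    (.box (.eq (.var 1) (.var 0)))))

/-- Defining axiom of ω:
(∀r)(r ∈ ω ↔ □(∀z)[(0 ∈ z ∧ (∀x)(x ∈ z → Sx ∈ z)) → r ∈ z]). -/
def omegaAx : Fm :=
  .all (Fm.iff (.mem (.var 0) .omega)
    (.box (.all (.imp
      (.and (.mem .zero (.var 0))
        (.all (.imp (.mem (.var 0) (.var 1))
          (.mem (.succ (.var 0)) (.var 1)))))
      (.mem (.var 1) (.var 0))))))

/-- Derivability in CC″ from a list of hypotheses: intuitionistic natural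
deduction with equality (with ex falso for the defined ⊥), the modal axioms
(1)–(6), the rule inferring A from □A (for theorems), extensionality, the
comprehension scheme, and the defining axioms of 0, S, ω.  In `compr` the
formula A has de Bruijn index 0 as the fixed variable r; lifting at 1
guarantees that the comprehension variable x does not occur freely in A. -/
inductive Prf : List Fm → Fm → Prop
  | hyp {Γ : List Fm} {A : Fm} : A ∈ Γ → Prf Γ A
  | andI {Γ : List Fm} {A B : Fm} : Prf Γ A → Prf Γ B → Prf Γ (.and A B)
  | andE1 {Γ : List Fm} {A B : Fm} : Prf Γ (.and A B) → Prf Γ A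
  | andE2 {Γ : List Fm} {A B : Fm} : Prf Γ (.and A B) → Prf Γ B
  | orI1 {Γ : List Fm} {A B : Fm} : Prf Γ A → Prf Γ (.or A B)
  | orI2 {Γ : List Fm} {A B : Fm} : Prf Γ B → Prf Γ (.or A B)
  | orE {Γ : List Fm} {A B C : Fm} :
      Prf Γ (.or A B) → Prf (A :: Γ) C → Prf (B :: Γ) C → Prf Γ C
  | impI {Γ : List Fm} {A B : Fm} : Prf (A :: Γ) B → Prf Γ (.imp A B)
  | impE {Γ : List Fm} {A B : Fm} : Prf Γ (.imp A B) → Prf Γ A → Prf Γ B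
  | exfalso {Γ : List Fm} {A : Fm} : Prf Γ Fm.bot → Prf Γ A
  | allI {Γ : List Fm} {A : Fm} : Prf (Γ.map Fm.shift) A → Prf Γ (.all A)
  | allE {Γ : List Fm} {A : Fm} (t : Tm) : Prf Γ (.all A) → Prf Γ (A.subst 0 t)
  | exI {Γ : List Fm} {A : Fm} (t : Tm) : Prf Γ (A.subst 0 t) → Prf Γ (.ex A)
  | exE {Γ : List Fm} {A B : Fm} :
      Prf Γ (.ex A) → Prf (A :: Γ.map Fm.shift) B.shift → Prf Γ B
  | refl {Γ : List Fm} (t : Tm) : Prf Γ (.eq t t)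
  | eqSubst {Γ : List Fm} {A : Fm} (s t : Tm) :
      Prf Γ (.eq s t) → Prf Γ (A.subst 0 s) → Prf Γ (A.subst 0 t)
  | ax1 {Γ : List Fm} {A : Fm} : Prf Γ (A.imp (.box A))
  | ax2 {Γ : List Fm} {A B : Fm} :
      Prf Γ (Fm.iff (.box (.and A B)) (.and (.box A) (.box B)))
  | ax3 {Γ : List Fm} {A B : Fm} :
      Prf Γ (Fm.iff (.box (.or A B)) (.or (.box A) (.box B)))
  | ax4 {Γ : List Fm} {A : Fm} : Prf Γ (Fm.iff (.box (.ex A)) (.ex (.box A)))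
  | ax5 {Γ : List Fm} {A : Fm} : Prf Γ (Fm.iff (.box (.all A)) (.all (.box A)))
  | ax6 {Γ : List Fm} {A B : Fm} :
      Prf Γ ((Fm.box (A.imp B)).imp ((Fm.box A).imp (.box B)))
  | boxE {A : Fm} : Prf [] (.box A) → Prf [] A
  | ext {Γ : List Fm} : Prf Γ extAx
  | compr {Γ : List Fm} (A : Fm) :
      Prf Γ (.ex (.all (Fm.iff (.mem (.var 0) (.var 1)) (.box (A.liftAt 1)))))
  | ax0 {Γ : List Fm} : Prf Γ zeroAx
  | axS {Γ : List Fm} : Prf Γ succAx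
  | axW {Γ : List Fm} : Prf Γ omegaAx

end CC2

namespace CC2

/-!
If `t` belongs to every inductive concept then so does `St`: an inductive `z` contains `t`, hence
contains `St`. Axiom (1) turns this implication into a provable one and axiom (6) then distributes
the box over it, which is what `t ∈ ω → St ∈ ω` says once the definition of `ω` is unfolded.
-/

namespace Tm

theorem subst_liftAt (d : ℕ) (s t : Tm) : subst d s (t.liftAt d) = t := by
  induction t with
  | var n => grind [liftAt, subst]
  | succ t ih => simp only [liftAt, subst, ih]
  | zero | omega => rfl

theorem liftAt_liftAt {d e : ℕ} (hde : d ≤ e) (t : Tm) :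
    (t.liftAt d).liftAt (e + 1) = (t.liftAt e).liftAt d := by
  induction t with
  | var n => grind [liftAt]
  | succ t ih => simp only [liftAt, ih]
  | zero | omega => rfl

end Tm

namespace Fm

/-- The formula `0 ∈ z ∧ (∀x)(x ∈ z → Sx ∈ z)`: the concept `z` is inductive. The term `z` is
lifted under the quantifier so that it does not capture `x`. -/
def isInductive (z : Tm) : Fm :=
  .and (.mem .zero z)
    (.all (.imp (.mem (.var 0) (z.liftAt 0)) (.mem (.succ (.var 0)) (z.liftAt 0))))

/-- The formula `(∀z)(z is inductive → t ∈ z)`, whose box defines membership of `t` in `ω`. -/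
def inAllInductive (t : Tm) : Fm :=
  .all (.imp (isInductive (.var 0)) (.mem (t.liftAt 0) (.var 0)))

theorem shift_inAllInductive (t : Tm) :
    (inAllInductive t).shift = inAllInductive (t.liftAt 0) :=
  congrArg (fun s ↦ all (imp (isInductive (.var 0)) (mem s (.var 0))))
    (Tm.liftAt_liftAt le_rfl t)

end Fm

namespace Prf

open Fm

variable {Γ : List Fm} {A B : Fm} {t z : Tm}

theorem box_mono (hAB : Prf Γ (A.imp B)) (hA : Prf Γ (.box A)) : Prf Γ (.box B) :=
  .impE (.impE .ax6 (.impE .ax1 hAB)) hA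

theorem mem_omega_iff (t : Tm) : Prf Γ (Fm.iff (.mem t .omega) (.box (inAllInductive t))) :=
  .allE t .axW

theorem succ_mem_of_isInductive (hz : Prf Γ (isInductive z)) (ht : Prf Γ (.mem t z)) :
    Prf Γ (.mem (.succ t) z) := by
  have closed : Prf Γ (Fm.imp (.mem t z) (.mem (.succ t) z)) := by
    simpa [Fm.subst, Tm.subst, Tm.subst_liftAt] using Prf.allE t (.andE2 hz)
  exact .impE closed ht

theorem mem_of_inAllInductive (ht : Prf Γ (inAllInductive t)) (hz : Prf Γ (isInductive z)) :
    Prf Γ (.mem t z) := by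
  have instantiated :
      Prf Γ (Fm.imp (isInductive z) (.mem (Tm.subst 0 z (t.liftAt 0)) z)) := .allE z ht
  rw [Tm.subst_liftAt] at instantiated
  exact .impE instantiated hz

theorem inAllInductive_succ (t : Tm) :
    Prf Γ ((inAllInductive t).imp (inAllInductive (.succ t))) := by
  refine .impI (.allI (.impI ?_))
  rw [List.map_cons, shift_inAllInductive]
  have z_inductive : Prf (isInductive (.var 0) :: inAllInductive (t.liftAt 0) :: Γ.map shift)
      (isInductive (.var 0)) := .hyp List.mem_cons_self
  have t_mem_z := mem_of_inAllInductive
    (.hyp (List.mem_cons_of_mem _ List.mem_cons_self)) z_inductive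
  exact succ_mem_of_isInductive z_inductive t_mem_z

theorem succ_mem_omega_of_mem (ht : Prf Γ (.mem t .omega)) : Prf Γ (.mem (.succ t) .omega) := by
  have box_t : Prf Γ (.box (inAllInductive t)) := .impE (.andE1 (mem_omega_iff t)) ht
  have box_succ : Prf Γ (.box (inAllInductive (.succ t))) := box_mono (inAllInductive_succ t) box_t
  exact .impE (.andE2 (mem_omega_iff (.succ t))) box_succ

end Prf

/-- The formula (∀x)(x ∈ ω → Sx ∈ ω) is provable in CC″. -/
theorem succ_mem_omega :
    Prf [] (.all (.imp (.mem (.var 0) .omega)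
      (.mem (.succ (.var 0)) .omega))) := by
  refine .allI (.impI ?_)
  exact .succ_mem_omega_of_mem (.hyp List.mem_cons_self)

end CC2
end

section
/- The formula (∀x)(Sx = 0 → □⊥) is provable in CC″. -/
namespace CC2

theorem Tm.subst_liftAt_s10 (d : ℕ) (s t : Tm) : Tm.subst d s (t.liftAt d) = t := by
  induction t with
  | var n =>
    rcases lt_or_ge n d with h | h
    · simp only [liftAt, subst, if_pos h]
    · simp only [liftAt, subst, if_neg h.not_gt, if_neg (Nat.lt_succ_of_le h).not_gt,
        if_neg (Nat.lt_succ_of_le h).ne', Nat.add_sub_cancel]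
  | zero => rfl
  | succ t ih => exact congrArg succ ih
  | omega => rfl

namespace Prf

variable {Γ : List Fm}

theorem mem_zero_iff (r : Tm) : Prf Γ (Fm.iff (.mem r .zero) (.box Fm.bot)) :=
  .allE r .ax0

theorem mem_succ_iff (r t : Tm) : Prf Γ (Fm.iff (.mem r (.succ t)) (.box (.eq r t))) := by
  have h : Prf Γ (Fm.iff (.mem (Tm.subst 0 t (r.liftAt 0)) (.succ t))
      (.box (.eq (Tm.subst 0 t (r.liftAt 0)) t))) :=
    .allE t (.allE r .axS)
  rwa [Tm.subst_liftAt_s10] at h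

theorem mem_congr_right {r s t : Tm} (hst : Prf Γ (.eq s t)) (hrs : Prf Γ (.mem r s)) :
    Prf Γ (.mem r t) := by
  -- `var 0` marks the argument being replaced, so `r` is lifted past it.
  have subst_mem (u : Tm) : Fm.subst 0 u (.mem (r.liftAt 0) (.var 0)) = .mem r u :=
    congrArg (Fm.mem · u) (Tm.subst_liftAt_s10 0 u r)
  rw [← subst_mem] at hrs ⊢
  exact .eqSubst s t hst hrs

theorem mem_succ_self (t : Tm) : Prf Γ (.mem t (.succ t)) :=
  (mem_succ_iff t t).andE2.impE (.impE .ax1 (.refl t))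

theorem box_bot_of_succ_eq_zero {t : Tm} (h : Prf Γ (.eq (.succ t) .zero)) :
    Prf Γ (.box Fm.bot) :=
  have mem_zero : Prf Γ (.mem t .zero) := mem_congr_right h (mem_succ_self t)
  (mem_zero_iff t).andE1.impE mem_zero

end Prf

/-- The formula (∀x)(Sx = 0 → □⊥) is provable in CC″
(here ⊥ stands for (∀x,y)(x ∈ y)). -/
theorem succ_ne_zero :
    Prf [] (.all (.imp (.eq (.succ (.var 0)) .zero) (.box Fm.bot))) :=
  .allI (.impI (.box_bot_of_succ_eq_zero (.hyp List.mem_cons_self)))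
end CC2
end
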